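/- Let χ be a complex character of G with χ|_K ≠ 1_K, and define Θ_χ : ℂP̃₀ → ℂP̃₁ by Θ_χ y = e_χ(y ∨ u) for y ∈ P̃₀. Then there is a unique H_χ ∈ P̃_{a−1,b,0} such that for every y ∈ P̃₀ one has Θ_χ y ≠ 0 if and only if y ⊆ H_χ. Moreover, Θ_χ restricts to a linear bijection from ℂP(x ∩ H_χ, H_χ) onto M(χ), and, with L₁, L₂, R₁, R₂, E*_{i,j} the matrices attached to P(x ∩ H_χ, H_χ) with respect to x ∩ H_χ, the following hold on ℂP(x ∩ H_χ, H_χ) for all 0 ≤ i ≤ a−1 and 0 ≤ j ≤ b: L̃₁Θ_χ = qΘ_χL₁; L̃₂Θ_χ = qΘ_χL₂; L̃₃Θ_χ = 0; R̃₁Θ_χ = Θ_χR₁; R̃₂Θ_χ = Θ_χR₂; R̃₃Θ_χ = 0; Ẽ*_{i,j,0}Θ_χ = Ẽ*_{a,j,0}Θ_χ = Ẽ*_{a,j,1}Θ_χ = 0; Ẽ*_{i,j,1}Θ_χ = Θ_χE*_{i,j}. -/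

import Mathlib

open Module

/-- The q-Pochhammer symbol `(q;q)_n = ∏_{ℓ=0}^{n-1} (1 - q^ℓ)`. -/
noncomputable def qPoch (q : ℂ) (n : ℕ) : ℂ := ∏ l ∈ Finset.range n, (1 - q ^ l)

/-- The q-Pochhammer symbol with an integer index (junk value for negative index). -/
noncomputable def qPochZ (q : ℂ) (n : ℤ) : ℂ := qPoch q n.toNat

/-- The Gaussian binomial coefficient `[m, n]_q`, with the convention that it
vanishes unless `0 ≤ n ≤ m`. -/
noncomputable def qGauss (q : ℂ) (m n : ℤ) : ℂ :=
  if 0 ≤ n ∧ n ≤ m then qPoch q m.toNat / (qPoch q n.toNat * qPoch q (m - n).toNat) else 0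

section Twisted

variable (F : Type) [Field F] [Fintype F] (n : ℕ)

/-- Membership of `y` in `P̃_{i,j,k}` (with respect to `x ⊆ H`). -/
def PtMem (x H : Submodule F (Fin n → F)) (i j k : ℤ) (y : Submodule F (Fin n → F)) : Prop :=
  (finrank F ↥(x ⊓ y) : ℤ) = i ∧ (finrank F ↥(H ⊓ y) : ℤ) = i + j ∧
    (finrank F y : ℤ) = i + j + k

open Classical in
/-- The diagonal matrix `Ẽ*_{i,j,k}`. -/
noncomputable def EstarT (x H : Submodule F (Fin n → F)) (i j k : ℤ) :
    Matrix (Submodule F (Fin n → F)) (Submodule F (Fin n → F)) ℂ :=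
  Matrix.diagonal fun y => if PtMem F n x H i j k y then 1 else 0

open Classical in
/-- The lowering matrix `L̃₁`. -/
noncomputable def LoneT (x H : Submodule F (Fin n → F)) :
    Matrix (Submodule F (Fin n → F)) (Submodule F (Fin n → F)) ℂ :=
  fun y z => if y ≤ z ∧ finrank F y + 1 = finrank F z ∧
    finrank F ↥(x ⊓ y) + 1 = finrank F ↥(x ⊓ z) ∧
    finrank F ↥(H ⊓ y) + 1 = finrank F ↥(H ⊓ z) then 1 else 0

open Classical in
/-- The lowering matrix `L̃₂`. -/
noncomputable def LtwoT (x H : Submodule F (Fin n → F)) :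
    Matrix (Submodule F (Fin n → F)) (Submodule F (Fin n → F)) ℂ :=
  fun y z => if y ≤ z ∧ finrank F y + 1 = finrank F z ∧
    finrank F ↥(x ⊓ y) = finrank F ↥(x ⊓ z) ∧
    finrank F ↥(H ⊓ y) + 1 = finrank F ↥(H ⊓ z) then 1 else 0

open Classical in
/-- The lowering matrix `L̃₃`. -/
noncomputable def LthreeT (x H : Submodule F (Fin n → F)) :
    Matrix (Submodule F (Fin n → F)) (Submodule F (Fin n → F)) ℂ :=
  fun y z => if y ≤ z ∧ finrank F y + 1 = finrank F z ∧
    finrank F ↥(x ⊓ y) = finrank F ↥(x ⊓ z) ∧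
    finrank F ↥(H ⊓ y) = finrank F ↥(H ⊓ z) then 1 else 0

open Classical in
/-- The raising matrix `R̃₁`. -/
noncomputable def RoneT (x H : Submodule F (Fin n → F)) :
    Matrix (Submodule F (Fin n → F)) (Submodule F (Fin n → F)) ℂ :=
  fun y z => if z ≤ y ∧ finrank F z + 1 = finrank F y ∧
    finrank F ↥(x ⊓ z) + 1 = finrank F ↥(x ⊓ y) ∧
    finrank F ↥(H ⊓ z) + 1 = finrank F ↥(H ⊓ y) then 1 else 0

open Classical in
/-- The raising matrix `R̃₂`. -/
noncomputable def RtwoT (x H : Submodule F (Fin n → F)) :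
    Matrix (Submodule F (Fin n → F)) (Submodule F (Fin n → F)) ℂ :=
  fun y z => if z ≤ y ∧ finrank F z + 1 = finrank F y ∧
    finrank F ↥(x ⊓ z) = finrank F ↥(x ⊓ y) ∧
    finrank F ↥(H ⊓ z) + 1 = finrank F ↥(H ⊓ y) then 1 else 0

open Classical in
/-- The raising matrix `R̃₃`. -/
noncomputable def RthreeT (x H : Submodule F (Fin n → F)) :
    Matrix (Submodule F (Fin n → F)) (Submodule F (Fin n → F)) ℂ :=
  fun y z => if z ≤ y ∧ finrank F z + 1 = finrank F y ∧
    finrank F ↥(x ⊓ z) = finrank F ↥(x ⊓ y) ∧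
    finrank F ↥(H ⊓ z) = finrank F ↥(H ⊓ y) then 1 else 0

open Classical in
/-- The diagonal matrix `E*_{i,j}` of `P(x', H')`, viewed inside `Mat_{P̃}(ℂ)`
(supported on the subspaces of `H'`). -/
noncomputable def EstarRel (x' H' : Submodule F (Fin n → F)) (i j : ℤ) :
    Matrix (Submodule F (Fin n → F)) (Submodule F (Fin n → F)) ℂ :=
  Matrix.diagonal fun y => if y ≤ H' ∧ (finrank F ↥(x' ⊓ y) : ℤ) = i ∧
    (finrank F y : ℤ) = i + j then 1 else 0

open Classical in
/-- The lowering matrix `L₁` of `P(x', H')`, viewed inside `Mat_{P̃}(ℂ)`. -/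
noncomputable def LoneRel (x' H' : Submodule F (Fin n → F)) :
    Matrix (Submodule F (Fin n → F)) (Submodule F (Fin n → F)) ℂ :=
  fun y z => if z ≤ H' ∧ y ≤ z ∧ finrank F y + 1 = finrank F z ∧
    finrank F ↥(x' ⊓ y) + 1 = finrank F ↥(x' ⊓ z) then 1 else 0

open Classical in
/-- The lowering matrix `L₂` of `P(x', H')`, viewed inside `Mat_{P̃}(ℂ)`. -/
noncomputable def LtwoRel (x' H' : Submodule F (Fin n → F)) :
    Matrix (Submodule F (Fin n → F)) (Submodule F (Fin n → F)) ℂ :=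
  fun y z => if z ≤ H' ∧ y ≤ z ∧ finrank F y + 1 = finrank F z ∧
    finrank F ↥(x' ⊓ y) = finrank F ↥(x' ⊓ z) then 1 else 0

open Classical in
/-- The raising matrix `R₁` of `P(x', H')`, viewed inside `Mat_{P̃}(ℂ)`. -/
noncomputable def RoneRel (x' H' : Submodule F (Fin n → F)) :
    Matrix (Submodule F (Fin n → F)) (Submodule F (Fin n → F)) ℂ :=
  fun y z => if y ≤ H' ∧ z ≤ y ∧ finrank F z + 1 = finrank F y ∧
    finrank F ↥(x' ⊓ z) + 1 = finrank F ↥(x' ⊓ y) then 1 else 0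

open Classical in
/-- The raising matrix `R₂` of `P(x', H')`, viewed inside `Mat_{P̃}(ℂ)`. -/
noncomputable def RtwoRel (x' H' : Submodule F (Fin n → F)) :
    Matrix (Submodule F (Fin n → F)) (Submodule F (Fin n → F)) ℂ :=
  fun y z => if y ≤ H' ∧ z ≤ y ∧ finrank F z + 1 = finrank F y ∧
    finrank F ↥(x' ⊓ z) = finrank F ↥(x' ⊓ y) then 1 else 0

end Twisted

section GroupPart

variable (F : Type) [Field F] [Fintype F] (n : ℕ)

/-- The subgroup `G` of `SL(Ṽ)` consisting of the elements fixing every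
vector of the hyperplane `H`. -/
noncomputable def Gsub (H : Submodule F (Fin n → F)) :
    Subgroup ((Fin n → F) ≃ₗ[F] (Fin n → F)) where
  carrier := {g | LinearEquiv.det g = 1 ∧ ∀ v ∈ H, g v = v}
  one_mem' := ⟨map_one _, fun v _ => rfl⟩
  mul_mem' := by
    rintro g h ⟨hg1, hg2⟩ ⟨hh1, hh2⟩
    refine ⟨by rw [map_mul, hg1, hh1, one_mul], fun v hv => ?_⟩
    show g (h v) = v
    rw [hh2 v hv, hg2 v hv]
  inv_mem' := by
    rintro g ⟨hg1, hg2⟩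
    refine ⟨by rw [map_inv, hg1, inv_one], fun v hv => ?_⟩
    show g.symm v = v
    conv_lhs => rw [← hg2 v hv]
    exact g.symm_apply_apply v

/-- The image of a subspace under a linear automorphism. -/
noncomputable def smap (g : (Fin n → F) ≃ₗ[F] (Fin n → F))
    (y : Submodule F (Fin n → F)) : Submodule F (Fin n → F) :=
  Submodule.map (g : (Fin n → F) →ₗ[F] (Fin n → F)) y

/-- The `χ`-homogeneous component of the span of the basis vectors indexed by `S`. -/
noncomputable def Mcomp (H : Submodule F (Fin n → F)) (χ : Gsub F n H →* ℂ)
    (S : Set (Submodule F (Fin n → F))) : Submodule ℂ (Submodule F (Fin n → F) → ℂ) where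
  carrier := {v | (∀ y, y ∉ S → v y = 0) ∧
      ∀ g : Gsub F n H, ∀ y : Submodule F (Fin n → F),
        v (smap F n ((g⁻¹ : Gsub F n H) : (Fin n → F) ≃ₗ[F] (Fin n → F)) y) = χ g * v y}
  zero_mem' := ⟨fun _ _ => rfl, fun g y => by simp⟩
  add_mem' := by
    rintro v w ⟨hv1, hv2⟩ ⟨hw1, hw2⟩
    refine ⟨fun y hy => by simp [hv1 y hy, hw1 y hy], fun g y => ?_⟩
    simp only [Pi.add_apply, hv2 g y, hw2 g y]
    ring
  smul_mem' := by
    rintro c v ⟨hv1, hv2⟩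
    refine ⟨fun y hy => by simp [hv1 y hy], fun g y => ?_⟩
    simp only [Pi.smul_apply, hv2 g y, smul_eq_mul]
    ring

open Classical in
/-- The characteristic vector (as a function) of a single subspace `y`. -/
noncomputable def delta (y z : Submodule F (Fin n → F)) : ℂ :=
  if z = y then 1 else 0

open Classical in
/-- The idempotent `e_χ = q^{-(a+b)} Σ_{g ∈ G} χ(g⁻¹) g` applied to a vector of `ℂP̃`. -/
noncomputable def echi (H : Submodule F (Fin n → F)) [Fintype (Gsub F n H)]
    (χ : Gsub F n H →* ℂ) (v : Submodule F (Fin n → F) → ℂ) :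
    Submodule F (Fin n → F) → ℂ := fun y =>
  ((Fintype.card F : ℂ) ^ (n - 1))⁻¹ *
    ∑ g : Gsub F n H, χ g⁻¹ *
      v (smap F n ((g⁻¹ : Gsub F n H) : (Fin n → F) ≃ₗ[F] (Fin n → F)) y)

open Classical in
/-- The linear map `Θ_χ : ℂP̃₀ → ℂP̃₁`, `Θ_χ y = e_χ(y ∨ u)`, as a matrix
(extended by zero on the basis vectors outside `ℂP̃₀`). -/
noncomputable def Theta (H : Submodule F (Fin n → F)) [Fintype (Gsub F n H)]
    (χ : Gsub F n H →* ℂ) (u : Submodule F (Fin n → F)) :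
    Matrix (Submodule F (Fin n → F)) (Submodule F (Fin n → F)) ℂ :=
  fun z y => if y ≤ H then echi F n H χ (delta F n (y ⊔ u)) z else 0

end GroupPart

/-- The condition `(g - id)(Ṽ) ⊆ x` defining the subgroup `K` of `G`. -/
def memK (F : Type) [Field F] [Fintype F] (n : ℕ) (x : Submodule F (Fin n → F))
    (g : (Fin n → F) ≃ₗ[F] (Fin n → F)) : Prop :=
  ∀ v : Fin n → F, g v - v ∈ x

set_option linter.unusedSectionVars false

section Aux

variable {F : Type} [Field F] [Fintype F] {n : ℕ}

theorem mem_smap_iff (g : (Fin n → F) ≃ₗ[F] (Fin n → F)) (y : Submodule F (Fin n → F))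
    (v : Fin n → F) : v ∈ smap F n g y ↔ g.symm v ∈ y := by
  unfold smap
  constructor
  · rintro ⟨w, hw, rfl⟩
    simpa using hw
  · intro h
    exact ⟨g.symm v, h, by simp⟩

theorem smap_mul (g h : (Fin n → F) ≃ₗ[F] (Fin n → F)) (y : Submodule F (Fin n → F)) :
    smap F n (g * h) y = smap F n g (smap F n h y) := by
  ext v
  rw [mem_smap_iff, mem_smap_iff, mem_smap_iff]
  rfl

theorem smap_one (y : Submodule F (Fin n → F)) : smap F n 1 y = y := by
  ext v
  rw [mem_smap_iff]
  rfl

theorem finrank_smap (g : (Fin n → F) ≃ₗ[F] (Fin n → F)) (y : Submodule F (Fin n → F)) :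
    finrank F (smap F n g y) = finrank F y :=
  LinearEquiv.finrank_map_eq g y

theorem smap_mono_iff (g : (Fin n → F) ≃ₗ[F] (Fin n → F)) (y z : Submodule F (Fin n → F)) :
    smap F n g y ≤ smap F n g z ↔ y ≤ z := by
  unfold smap
  exact Submodule.map_le_map_iff_of_injective g.injective y z

variable {H : Submodule F (Fin n → F)}

theorem G_fix (g : Gsub F n H) {v : Fin n → F} (hv : v ∈ H) :
    (g : (Fin n → F) ≃ₗ[F] (Fin n → F)) v = v := g.2.2 v hv

theorem smap_inv_smap (g : Gsub F n H) (y : Submodule F (Fin n → F)) :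
    smap F n ((g⁻¹ : Gsub F n H) : (Fin n → F) ≃ₗ[F] (Fin n → F)) (smap F n g y) = y := by
  rw [← smap_mul]
  have : ((g⁻¹ : Gsub F n H) : (Fin n → F) ≃ₗ[F] (Fin n → F)) * g = 1 := by simp
  rw [this, smap_one]

theorem smap_smap_inv (g : Gsub F n H) (y : Submodule F (Fin n → F)) :
    smap F n g (smap F n ((g⁻¹ : Gsub F n H) : (Fin n → F) ≃ₗ[F] (Fin n → F)) y) = y := by
  rw [← smap_mul]
  have : (g : (Fin n → F) ≃ₗ[F] (Fin n → F)) * ((g⁻¹ : Gsub F n H) : _) = 1 := by simp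
  rw [this, smap_one]

theorem inf_smap (g : Gsub F n H) {x : Submodule F (Fin n → F)} (hx : x ≤ H)
    (y : Submodule F (Fin n → F)) : x ⊓ smap F n g y = x ⊓ y := by
  ext v
  simp only [Submodule.mem_inf, mem_smap_iff]
  refine and_congr_right fun hv => ?_
  have : (g : (Fin n → F) ≃ₗ[F] (Fin n → F)).symm v = v := by
    rw [LinearEquiv.symm_apply_eq, G_fix g (hx hv)]
  rw [this]

theorem smap_of_le (g : Gsub F n H) {y : Submodule F (Fin n → F)} (hy : y ≤ H) :
    smap F n g y = y := by
  have h1 := inf_smap g hy y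
  rw [inf_idem, inf_eq_left] at h1
  exact (Submodule.eq_of_le_of_finrank_eq h1 (finrank_smap _ _).symm).symm

theorem smap_le_iff (g : Gsub F n H) (y : Submodule F (Fin n → F)) :
    smap F n g y ≤ H ↔ y ≤ H := by
  have h := smap_mono_iff (g : (Fin n → F) ≃ₗ[F] (Fin n → F)) y H
  rwa [smap_of_le g (le_refl H)] at h

variable {f : Dual F (Fin n → F)} {u0 : Fin n → F}

theorem G_formula (hf : ∀ v, f v = 0 ↔ v ∈ H) (hu : f u0 = 1) (g : Gsub F n H)
    (v : Fin n → F) :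
    (g : (Fin n → F) ≃ₗ[F] (Fin n → F)) v
      = v + f v • ((g : (Fin n → F) ≃ₗ[F] (Fin n → F)) u0 - u0) := by
  have h1 : v - f v • u0 ∈ H := by rw [← hf]; simp [hu]
  have h2 := G_fix g h1
  rw [map_sub, map_smul] at h2
  rw [smul_sub]
  linear_combination (exp := 1) h2

theorem G_sub_mem (hf : ∀ v, f v = 0 ↔ v ∈ H) (hu : f u0 = 1) (g : Gsub F n H) :
    (g : (Fin n → F) ≃ₗ[F] (Fin n → F)) u0 - u0 ∈ H := by
  have h1 : ((g : (Fin n → F) ≃ₗ[F] (Fin n → F)) : (Fin n → F) →ₗ[F] (Fin n → F))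
      = LinearMap.transvection f ((g : (Fin n → F) ≃ₗ[F] (Fin n → F)) u0 - u0) := by
    refine LinearMap.ext fun v => ?_
    rw [LinearMap.transvection.apply]
    exact G_formula hf hu g _
  have h2 := congrArg LinearMap.det h1
  rw [LinearMap.transvection.det, ← LinearEquiv.coe_det, g.2.1] at h2
  rw [← hf]
  simpa using h2

theorem G_ext (hf : ∀ v, f v = 0 ↔ v ∈ H) (hu : f u0 = 1) (g g' : Gsub F n H)
    (h : (g : (Fin n → F) ≃ₗ[F] (Fin n → F)) u0 = (g' : (Fin n → F) ≃ₗ[F] (Fin n → F)) u0) :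
    g = g' := by
  apply Subtype.ext
  apply LinearEquiv.ext
  intro v
  rw [G_formula hf hu g, G_formula hf hu g', h]

/-- The element of `G` attached to a vector of `H`. -/
noncomputable def tauG (hf : ∀ v, f v = 0 ↔ v ∈ H) (h : H) : Gsub F n H :=
  ⟨LinearEquiv.transvection ((hf h).2 h.2), by
    refine ⟨LinearEquiv.transvection.det_eq_one _, fun v hv => ?_⟩
    rw [LinearEquiv.transvection.apply, (hf v).2 hv, zero_smul, add_zero]⟩

theorem tauG_apply (hf : ∀ v, f v = 0 ↔ v ∈ H) (h : H) (v : Fin n → F) :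
    (tauG hf h : (Fin n → F) ≃ₗ[F] (Fin n → F)) v = v + f v • (h : Fin n → F) :=
  LinearEquiv.transvection.apply ((hf h).2 h.2) v

/-- The bijection between `G` and `H`. -/
noncomputable def GequivH (hf : ∀ v, f v = 0 ↔ v ∈ H) (hu : f u0 = 1) : Gsub F n H ≃ H where
  toFun g := ⟨_, G_sub_mem hf hu g⟩
  invFun h := tauG hf h
  left_inv g := by
    apply G_ext hf hu
    rw [tauG_apply, hu]; simp
  right_inv h := by
    apply Subtype.ext
    simp [tauG_apply, hu]

/-- The additive character of `H` attached to `χ`. -/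
noncomputable def psiH (hf : ∀ v, f v = 0 ↔ v ∈ H) (hu : f u0 = 1)
    (χ : Gsub F n H →* ℂ) : AddChar H ℂ where
  toFun h := χ (tauG hf h)
  map_zero_eq_one' := by
    have : tauG hf (0 : H) = 1 := by
      apply G_ext hf hu
      simp [tauG_apply]
    rw [this, map_one]
  map_add_eq_mul' h k := by
    have : tauG hf (h + k) = tauG hf h * tauG hf k := by
      apply G_ext hf hu
      have h2 : f (k : Fin n → F) = 0 := (hf _).2 k.2
      simp [tauG_apply, hu, h2]
      abel
    rw [this, map_mul]

theorem psiH_apply (hf : ∀ v, f v = 0 ↔ v ∈ H) (hu : f u0 = 1)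
    (χ : Gsub F n H →* ℂ) (h : H) : psiH hf hu χ h = χ (tauG hf h) := rfl

/-- `χ` is trivial on the part of `G` which corresponds to `y`. -/
def Ctriv (u0 : Fin n → F) (χ : Gsub F n H →* ℂ) (y : Submodule F (Fin n → F)) : Prop :=
  ∀ g : Gsub F n H, (g : (Fin n → F) ≃ₗ[F] (Fin n → F)) u0 - u0 ∈ y → χ g = 1

theorem smap_eq_of_mem (hf : ∀ v, f v = 0 ↔ v ∈ H) (hu : f u0 = 1) (g : Gsub F n H)
    {z : Submodule F (Fin n → F)}
    (hz : (g : (Fin n → F) ≃ₗ[F] (Fin n → F)) u0 - u0 ∈ z) : smap F n g z = z := by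
  refine Submodule.eq_of_le_of_finrank_eq ?_ (finrank_smap _ _)
  rintro _ ⟨w, hw, rfl⟩
  simp only [LinearEquiv.coe_coe]
  rw [G_formula hf hu g]
  exact z.add_mem hw (z.smul_mem _ hz)

theorem span_inf (hf : ∀ v, f v = 0 ↔ v ∈ H) (hu : f u0 = 1) :
    H ⊓ Submodule.span F {u0} = ⊥ := by
  rw [eq_bot_iff]
  rintro v ⟨hv, hv2⟩
  obtain ⟨c, rfl⟩ := Submodule.mem_span_singleton.1 hv2
  have := (hf _).2 hv
  rw [map_smul, hu, smul_eq_mul, mul_one] at this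
  simp [this]

theorem inf_sup_span (hf : ∀ v, f v = 0 ↔ v ∈ H) (hu : f u0 = 1)
    {y : Submodule F (Fin n → F)} (hy : y ≤ H) :
    H ⊓ (y ⊔ Submodule.span F {u0}) = y := by
  rw [inf_comm, sup_inf_assoc_of_le _ hy, inf_comm, span_inf hf hu, sup_bot_eq]

theorem inf_sup_span' (hf : ∀ v, f v = 0 ↔ v ∈ H) (hu : f u0 = 1)
    {x y : Submodule F (Fin n → F)} (hx : x ≤ H) (hy : y ≤ H) :
    x ⊓ (y ⊔ Submodule.span F {u0}) = x ⊓ y := by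
  conv_lhs => rw [← inf_eq_left.2 hx, inf_assoc, inf_sup_span hf hu hy]

theorem finrank_sup_span (hf : ∀ v, f v = 0 ↔ v ∈ H) (hu : f u0 = 1)
    {y : Submodule F (Fin n → F)} (hy : y ≤ H) :
    finrank F ↥(y ⊔ Submodule.span F {u0}) = finrank F y + 1 := by
  have h1 := Submodule.finrank_sup_add_finrank_inf_eq y (Submodule.span F {u0})
  have h2 : y ⊓ Submodule.span F {u0} = ⊥ := by
    rw [eq_bot_iff, ← span_inf hf hu]
    exact inf_le_inf_right _ hy
  have h3 : u0 ≠ 0 := by rintro rfl; simp at hu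
  rw [h2, finrank_bot, finrank_span_singleton h3] at h1
  omega

theorem sup_span_not_le (hf : ∀ v, f v = 0 ↔ v ∈ H) (hu : f u0 = 1)
    (y : Submodule F (Fin n → F)) : ¬ y ⊔ Submodule.span F {u0} ≤ H := by
  intro h
  have : u0 ∈ H := h (Submodule.mem_sup_right (Submodule.mem_span_singleton_self _))
  rw [← hf, hu] at this
  exact one_ne_zero this

theorem eq_sup_span (hf : ∀ v, f v = 0 ↔ v ∈ H) (hu : f u0 = 1)
    {w : Submodule F (Fin n → F)} (hw : Submodule.span F {u0} ≤ w) :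
    (H ⊓ w) ⊔ Submodule.span F {u0} = w := by
  apply le_antisymm (sup_le inf_le_right hw)
  intro v hv
  have h0 : u0 ∈ w := hw (Submodule.mem_span_singleton_self _)
  have h1 : v - f v • u0 ∈ H := by rw [← hf]; simp [hu]
  have h2 : v = (v - f v • u0) + f v • u0 := by abel
  rw [h2]
  exact Submodule.add_mem_sup ⟨h1, w.sub_mem hv (w.smul_mem _ h0)⟩
    (Submodule.smul_mem _ _ (Submodule.mem_span_singleton_self _))

theorem sup_span_le_iff (hf : ∀ v, f v = 0 ↔ v ∈ H) (hu : f u0 = 1)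
    {y z : Submodule F (Fin n → F)} (hy : y ≤ H) (hz : z ≤ H) :
    y ⊔ Submodule.span F {u0} ≤ z ⊔ Submodule.span F {u0} ↔ y ≤ z := by
  constructor
  · intro h
    rw [← inf_sup_span hf hu hy, ← inf_sup_span hf hu hz]
    exact inf_le_inf_left _ h
  · intro h
    exact sup_le_sup_right h _

theorem exists_smap_eq (hf : ∀ v, f v = 0 ↔ v ∈ H) (hu : f u0 = 1)
    {z : Submodule F (Fin n → F)} (hz : ¬ z ≤ H) :
    ∃ g : Gsub F n H, smap F n g z = (H ⊓ z) ⊔ Submodule.span F {u0} := by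
  obtain ⟨v, hv, hvH⟩ := Set.not_subset.1 hz
  have hv' : v ∈ z := hv
  have hfv : f v ≠ 0 := fun h => hvH ((hf v).1 h)
  have hh : u0 - (f v)⁻¹ • v ∈ H := by
    rw [← hf]; simp [hu, hfv]
  refine ⟨tauG hf ⟨_, hh⟩, ?_⟩
  rw [← inf_smap (tauG hf ⟨_, hh⟩) le_rfl z]
  symm
  apply eq_sup_span hf hu
  rw [Submodule.span_singleton_le_iff_mem]
  refine ⟨(f v)⁻¹ • v, z.smul_mem _ hv', ?_⟩
  simp only [LinearEquiv.coe_coe]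
  rw [tauG_apply]
  simp [hfv]

theorem smap_sup_span_iff (hf : ∀ v, f v = 0 ↔ v ∈ H) (hu : f u0 = 1) (g : Gsub F n H)
    {y : Submodule F (Fin n → F)} (hy : y ≤ H) :
    smap F n g (y ⊔ Submodule.span F {u0}) = y ⊔ Submodule.span F {u0} ↔
      (g : (Fin n → F) ≃ₗ[F] (Fin n → F)) u0 - u0 ∈ y := by
  constructor
  · intro h
    have h0 : u0 ∈ y ⊔ Submodule.span F {u0} :=
      Submodule.mem_sup_right (Submodule.mem_span_singleton_self _)
    have h1 : (g : (Fin n → F) ≃ₗ[F] (Fin n → F)) u0 ∈ y ⊔ Submodule.span F {u0} := by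
      rw [← h]
      exact ⟨u0, h0, rfl⟩
    rw [← inf_sup_span hf hu hy]
    exact ⟨G_sub_mem hf hu g, Submodule.sub_mem _ h1 h0⟩
  · intro h
    exact smap_eq_of_mem hf hu g (Submodule.mem_sup_left h)

theorem le_of_finrank_inf {H z : Submodule F (Fin n → F)}
    (h : finrank F ↥(H ⊓ z) = finrank F z) : z ≤ H := by
  have := Submodule.eq_of_le_of_finrank_eq (inf_le_right : H ⊓ z ≤ z) h
  exact inf_eq_right.1 this

theorem finrank_inf_of_le {H z : Submodule F (Fin n → F)}
    (h : z ≤ H) : finrank F ↥(H ⊓ z) = finrank F z := by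
  rw [inf_eq_right.2 h]

theorem finrank_inf_of_not_le (hf : ∀ v, f v = 0 ↔ v ∈ H) (hu : f u0 = 1)
    {z : Submodule F (Fin n → F)} (hz : ¬ z ≤ H) :
    finrank F z = finrank F ↥(H ⊓ z) + 1 := by
  obtain ⟨g, hg⟩ := exists_smap_eq hf hu hz
  rw [← finrank_smap g z, hg, finrank_sup_span hf hu inf_le_left]

variable {χ : Gsub F n H →* ℂ}

theorem chi_inv_mul (g : Gsub F n H) : χ g⁻¹ * χ g = 1 := by
  rw [← map_mul, inv_mul_cancel, map_one]

theorem M_smap {m : Submodule F (Fin n → F) → ℂ} {S : Set (Submodule F (Fin n → F))}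
    (hm : m ∈ Mcomp F n H χ S) (g : Gsub F n H) (z : Submodule F (Fin n → F)) :
    m z = χ g * m (smap F n g z) := by
  have := hm.2 g (smap F n g z)
  rwa [smap_inv_smap] at this

theorem M_vanish (hf : ∀ v, f v = 0 ↔ v ∈ H) (hu : f u0 = 1)
    {m : Submodule F (Fin n → F) → ℂ} {S : Set (Submodule F (Fin n → F))}
    (hm : m ∈ Mcomp F n H χ S) {z : Submodule F (Fin n → F)} (hz : ¬ Ctriv u0 χ (H ⊓ z)) :
    m z = 0 := by
  unfold Ctriv at hz
  push Not at hz
  obtain ⟨g, hg, hg1⟩ := hz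
  have h1 := M_smap hm g z
  rw [smap_eq_of_mem hf hu g hg.2] at h1
  have h2 : (χ g - 1) * m z = 0 := by rw [sub_mul, ← h1]; ring
  rcases mul_eq_zero.1 h2 with h | h
  · exact absurd (sub_eq_zero.1 h) hg1
  · exact h

theorem M_ext (hf : ∀ v, f v = 0 ↔ v ∈ H) (hu : f u0 = 1)
    {m m' : Submodule F (Fin n → F) → ℂ}
    (hm : m ∈ Mcomp F n H χ {y | ¬ y ≤ H}) (hm' : m' ∈ Mcomp F n H χ {y | ¬ y ≤ H})
    (h : ∀ y ≤ H, Ctriv u0 χ y →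
      m (y ⊔ Submodule.span F {u0}) = m' (y ⊔ Submodule.span F {u0})) : m = m' := by
  funext z
  by_cases hz : z ≤ H
  · rw [hm.1 z (by simpa using hz), hm'.1 z (by simpa using hz)]
  by_cases hC : Ctriv u0 χ (H ⊓ z)
  · obtain ⟨g, hg⟩ := exists_smap_eq hf hu hz
    rw [M_smap hm g, M_smap hm' g, hg, h _ inf_le_left hC]
  · rw [M_vanish hf hu hm hC, M_vanish hf hu hm' hC]

variable [Fintype (Gsub F n H)]

theorem echi_mem {w : Submodule F (Fin n → F) → ℂ} (hw : ∀ y, y ≤ H → w y = 0) :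
    echi F n H χ w ∈ Mcomp F n H χ {y | ¬ y ≤ H} := by
  constructor
  · intro y hy
    have hy' : y ≤ H := by simpa using hy
    unfold echi
    rw [Finset.sum_eq_zero, mul_zero]
    intro g _
    rw [hw _ ((smap_le_iff _ _).2 hy'), mul_zero]
  · intro g y
    unfold echi
    rw [mul_left_comm]
    congr 1
    rw [Finset.mul_sum, ← Equiv.sum_comp (Equiv.mulLeft g) (fun k => χ g * _)]
    refine Finset.sum_congr rfl fun k _ => ?_
    rw [← smap_mul]
    have h1 : (((Equiv.mulLeft g) k)⁻¹ : Gsub F n H) = k⁻¹ * g⁻¹ := by simp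
    rw [h1, map_mul]
    have h2 := chi_inv_mul (χ := χ) g
    push_cast
    linear_combination (-(χ k⁻¹ * w _)) * h2

theorem delta_vanish (hf : ∀ v, f v = 0 ↔ v ∈ H) (hu : f u0 = 1)
    (y : Submodule F (Fin n → F)) : ∀ z, z ≤ H → delta F n (y ⊔ Submodule.span F {u0}) z = 0 := by
  intro z hz
  unfold delta
  rw [if_neg]
  rintro rfl
  exact sup_span_not_le hf hu y hz

theorem Theta_col_mem (hf : ∀ v, f v = 0 ↔ v ∈ H) (hu : f u0 = 1)
    (y : Submodule F (Fin n → F)) :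
    (fun z => Theta F n H χ (Submodule.span F {u0}) z y) ∈ Mcomp F n H χ {y | ¬ y ≤ H} := by
  by_cases hy : y ≤ H
  · simp only [Theta, if_pos hy]
    exact echi_mem (delta_vanish hf hu y)
  · simp only [Theta, if_neg hy]
    exact Submodule.zero_mem _

/-- `Θ(z,y)` vanishes unless `y = H ∩ z`. -/
theorem Theta_zero (hf : ∀ v, f v = 0 ↔ v ∈ H) (hu : f u0 = 1)
    {y z : Submodule F (Fin n → F)} (hyz : y ≠ H ⊓ z) :
    Theta F n H χ (Submodule.span F {u0}) z y = 0 := by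
  unfold Theta
  split_ifs with hy
  · unfold echi
    rw [Finset.sum_eq_zero, mul_zero]
    intro g _
    unfold delta
    rw [if_neg, mul_zero]
    intro h
    apply hyz
    have h2 := congrArg (H ⊓ ·) h
    rw [inf_smap _ le_rfl, inf_sup_span hf hu hy] at h2
    exact h2.symm
  · rfl

theorem Theta_diag (hf : ∀ v, f v = 0 ↔ v ∈ H) (hu : f u0 = 1)
    {y : Submodule F (Fin n → F)} (hy : y ≤ H) (hC : Ctriv u0 χ y) :
    Theta F n H χ (Submodule.span F {u0}) (y ⊔ Submodule.span F {u0}) y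
      = ((Fintype.card F : ℂ) ^ (n - 1))⁻¹ * (Fintype.card F : ℂ) ^ (finrank F y) := by
  classical
  unfold Theta
  rw [if_pos hy]
  unfold echi
  congr 1
  have h1 : ∀ g : Gsub F n H, χ g⁻¹ * delta F n (y ⊔ Submodule.span F {u0})
      (smap F n ((g⁻¹ : Gsub F n H) : (Fin n → F) ≃ₗ[F] (Fin n → F))
        (y ⊔ Submodule.span F {u0})) =
      if (GequivH hf hu g⁻¹ : Fin n → F) ∈ y then 1 else 0 := by
    intro g
    unfold delta
    have := smap_sup_span_iff hf hu g⁻¹ hy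
    by_cases h : (GequivH hf hu g⁻¹ : Fin n → F) ∈ y
    · rw [if_pos h, if_pos (this.2 h), hC g⁻¹ h, mul_one]
    · rw [if_neg h, if_neg (fun h' => h (this.1 h')), mul_zero]
  rw [Finset.sum_congr rfl fun g _ => h1 g]
  rw [show (∑ g : Gsub F n H, if (GequivH hf hu g⁻¹ : Fin n → F) ∈ y then (1 : ℂ) else 0) = _ from
    Equiv.sum_comp (Equiv.inv (Gsub F n H))
    (fun g => if (GequivH hf hu g : Fin n → F) ∈ y then (1 : ℂ) else 0)]
  have : Fintype H := Fintype.ofFinite _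
  have : Fintype y := Fintype.ofFinite _
  rw [Equiv.sum_comp (GequivH hf hu) (fun h : H => if (h : Fin n → F) ∈ y then (1 : ℂ) else 0)]
  rw [Finset.sum_boole]
  have h2 : Fintype.card y = Fintype.card F ^ finrank F y := Module.card_eq_pow_finrank
  rw [← Nat.cast_pow, ← h2, ← Fintype.card_subtype]
  congr 1
  refine Fintype.card_congr
    ⟨fun h => ⟨h.1.1, h.2⟩, fun v => ⟨⟨v.1, hy v.2⟩, v.2⟩, fun _ => rfl, fun _ => rfl⟩

theorem const_ne_zero (k l : ℕ) :
    ((Fintype.card F : ℂ) ^ k)⁻¹ * (Fintype.card F : ℂ) ^ l ≠ 0 := by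
  have : (Fintype.card F : ℂ) ≠ 0 := by exact_mod_cast Fintype.card_ne_zero
  positivity

theorem echi_ne_zero_iff (hf : ∀ v, f v = 0 ↔ v ∈ H) (hu : f u0 = 1)
    {y : Submodule F (Fin n → F)} (hy : y ≤ H) :
    echi F n H χ (delta F n (y ⊔ Submodule.span F {u0})) ≠ 0 ↔ Ctriv u0 χ y := by
  constructor
  · intro h
    by_contra hC
    apply h
    refine M_ext hf hu (echi_mem (delta_vanish hf hu y)) (Submodule.zero_mem (Mcomp F n H χ _)) ?_
    intro z hz hCz
    have hne : y ≠ H ⊓ (z ⊔ Submodule.span F {u0}) := by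
      rw [inf_sup_span hf hu hz]
      rintro rfl
      exact hC hCz
    have := Theta_zero (χ := χ) hf hu hne
    unfold Theta at this
    rwa [if_pos hy] at this
  · intro hC h
    have h1 := Theta_diag hf hu hy hC
    unfold Theta at h1
    rw [if_pos hy, h] at h1
    exact const_ne_zero _ _ h1.symm

variable [Fintype (Submodule F (Fin n → F))]

theorem Theta_mulVec_mem (hf : ∀ v, f v = 0 ↔ v ∈ H) (hu : f u0 = 1)
    (v : Submodule F (Fin n → F) → ℂ) :
    (Theta F n H χ (Submodule.span F {u0})).mulVec v ∈ Mcomp F n H χ {y | ¬ y ≤ H} := by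
  have : (Theta F n H χ (Submodule.span F {u0})).mulVec v
      = ∑ y, v y • (fun z => Theta F n H χ (Submodule.span F {u0}) z y) := by
    funext z
    simp [Matrix.mulVec, dotProduct, Finset.sum_apply, mul_comm]
  rw [this]
  exact Submodule.sum_mem _ fun y _ => Submodule.smul_mem _ _ (Theta_col_mem hf hu y)

theorem Theta_mulVec_apply (hf : ∀ v, f v = 0 ↔ v ∈ H) (hu : f u0 = 1)
    (v : Submodule F (Fin n → F) → ℂ) (z : Submodule F (Fin n → F)) :
    (Theta F n H χ (Submodule.span F {u0})).mulVec v z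
      = Theta F n H χ (Submodule.span F {u0}) z (H ⊓ z) * v (H ⊓ z) := by
  simp only [Matrix.mulVec, dotProduct]
  apply Finset.sum_eq_single
  · intro y _ hy
    rw [Theta_zero hf hu hy, zero_mul]
  · simp

theorem Theta_mulVec_sup (hf : ∀ v, f v = 0 ↔ v ∈ H) (hu : f u0 = 1)
    (v : Submodule F (Fin n → F) → ℂ) {y : Submodule F (Fin n → F)} (hy : y ≤ H)
    (hC : Ctriv u0 χ y) :
    (Theta F n H χ (Submodule.span F {u0})).mulVec v (y ⊔ Submodule.span F {u0})
      = ((Fintype.card F : ℂ) ^ (n - 1))⁻¹ * (Fintype.card F : ℂ) ^ (finrank F y) * v y := by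
  rw [Theta_mulVec_apply hf hu, inf_sup_span hf hu hy, Theta_diag hf hu hy hC]

/-- Invariance of a matrix under `G`. -/
def Ginv (H : Submodule F (Fin n → F))
    (A : Matrix (Submodule F (Fin n → F)) (Submodule F (Fin n → F)) ℂ) : Prop :=
  ∀ (g : Gsub F n H) (y z), A (smap F n g y) (smap F n g z) = A y z

theorem smap_bijective (g : Gsub F n H) : Function.Bijective (smap F n g) :=
  ⟨fun y z h => by
    rw [← smap_inv_smap g y, h, smap_inv_smap], fun y => ⟨_, smap_smap_inv g y⟩⟩

theorem Ginv_mulVec {A : Matrix (Submodule F (Fin n → F)) (Submodule F (Fin n → F)) ℂ}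
    (hA : Ginv H A) {m : Submodule F (Fin n → F) → ℂ} {S : Set (Submodule F (Fin n → F))}
    (hm : m ∈ Mcomp F n H χ S) (g : Gsub F n H) (y : Submodule F (Fin n → F)) :
    A.mulVec m (smap F n ((g⁻¹ : Gsub F n H) : (Fin n → F) ≃ₗ[F] (Fin n → F)) y)
      = χ g * A.mulVec m y := by
  simp only [Matrix.mulVec, dotProduct]
  rw [Finset.mul_sum, ← (smap_bijective g⁻¹).sum_comp
    (fun z => A (smap F n ((g⁻¹ : Gsub F n H) : (Fin n → F) ≃ₗ[F] (Fin n → F)) y) z * m z)]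
  refine Finset.sum_congr rfl fun z _ => ?_
  rw [hA g⁻¹, hm.2 g z]
  ring

theorem Ginv_mem {A : Matrix (Submodule F (Fin n → F)) (Submodule F (Fin n → F)) ℂ}
    (hA : Ginv H A) (hA2 : ∀ y z, y ≤ H → A y z ≠ 0 → z ≤ H)
    {m : Submodule F (Fin n → F) → ℂ} (hm : m ∈ Mcomp F n H χ {y | ¬ y ≤ H}) :
    A.mulVec m ∈ Mcomp F n H χ {y | ¬ y ≤ H} := by
  refine ⟨fun y hy => ?_, Ginv_mulVec hA hm⟩
  simp only [Matrix.mulVec, dotProduct]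
  refine Finset.sum_eq_zero fun z _ => ?_
  by_cases h : A y z = 0
  · rw [h, zero_mul]
  · rw [hm.1 z (by simpa using hA2 y z (by simpa using hy) h), mul_zero]

theorem L3_zero
    {A : Matrix (Submodule F (Fin n → F)) (Submodule F (Fin n → F)) ℂ}
    (hA : Ginv H A) (hA2 : ∀ y z, A y z ≠ 0 → y ≤ H) (hH : ¬ Ctriv u0 χ H)
    {m : Submodule F (Fin n → F) → ℂ} (hm : m ∈ Mcomp F n H χ {y | ¬ y ≤ H}) :
    A.mulVec m = 0 := by
  funext y
  rw [Pi.zero_apply]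
  by_cases hy : y ≤ H
  · unfold Ctriv at hH
    push Not at hH
    obtain ⟨g, -, hg1⟩ := hH
    have h1 := Ginv_mulVec hA hm g y
    rw [smap_of_le _ hy] at h1
    have h2 : (χ g - 1) * A.mulVec m y = 0 := by rw [sub_mul, ← h1]; ring
    rcases mul_eq_zero.1 h2 with h | h
    · exact absurd (sub_eq_zero.1 h) hg1
    · exact h
  · simp only [Matrix.mulVec, dotProduct]
    refine Finset.sum_eq_zero fun z _ => ?_
    by_cases h : A y z = 0
    · rw [h, zero_mul]
    · exact absurd (hA2 _ _ h) hy

theorem L_comm (hf : ∀ v, f v = 0 ↔ v ∈ H) (hu : f u0 = 1)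
    {A B : Matrix (Submodule F (Fin n → F)) (Submodule F (Fin n → F)) ℂ}
    {W : Submodule F (Fin n → F)} (hWH : W ≤ H)
    (hW : ∀ y ≤ H, Ctriv u0 χ y ↔ y ≤ W)
    (hA : Ginv H A) (hA2 : ∀ y z, y ≤ H → A y z ≠ 0 → z ≤ H)
    (hA3 : ∀ y z, A y z ≠ 0 → y ≤ z)
    (hAB : ∀ y z, y ≤ W → z ≤ W →
      A (y ⊔ Submodule.span F {u0}) (z ⊔ Submodule.span F {u0}) = B y z)
    (hB : ∀ y z, B y z ≠ 0 → finrank F y + 1 = finrank F z)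
    (v : Submodule F (Fin n → F) → ℂ) (hv : ∀ y, ¬ y ≤ W → v y = 0) :
    A.mulVec ((Theta F n H χ (Submodule.span F {u0})).mulVec v)
      = (Fintype.card F : ℂ) • (Theta F n H χ (Submodule.span F {u0})).mulVec (B.mulVec v) := by
  refine M_ext hf hu (Ginv_mem hA hA2 (Theta_mulVec_mem hf hu v))
    (Submodule.smul_mem _ _ (Theta_mulVec_mem hf hu _)) ?_
  intro y hy hC
  have hyW := (hW y hy).1 hC
  rw [Pi.smul_apply, Theta_mulVec_sup hf hu _ hy hC]
  have hT := fun z => Theta_mulVec_sup (χ := χ) hf hu v (y := z)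
  have hmem := Theta_mulVec_mem (χ := χ) hf hu v
  set t := (Theta F n H χ (Submodule.span F {u0})).mulVec v with ht
  simp only [Matrix.mulVec, dotProduct, smul_eq_mul, Finset.mul_sum]
  symm
  refine Finset.sum_bij_ne_zero (fun z _ _ => z ⊔ Submodule.span F {u0}) (by simp) ?_ ?_ ?_
  · intro z1 _ h1 z2 _ h2 h
    have k1 : z1 ≤ W := by
      by_contra h'; apply h1; rw [hv _ h']; simp
    have k2 : z2 ≤ W := by
      by_contra h'; apply h2; rw [hv _ h']; simp
    rw [← inf_sup_span hf hu (k1.trans hWH), h, inf_sup_span hf hu (k2.trans hWH)]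
  · intro w _ hw
    have hA0 : A (y ⊔ Submodule.span F {u0}) w ≠ 0 := left_ne_zero_of_mul hw
    have ht0 : t w ≠ 0 := right_ne_zero_of_mul hw
    have huw : Submodule.span F {u0} ≤ w := le_sup_right.trans (hA3 _ _ hA0)
    have hC' : Ctriv u0 χ (H ⊓ w) := by
      by_contra h
      exact ht0 (M_vanish hf hu hmem h)
    have hwW : H ⊓ w ≤ W := (hW _ inf_le_left).1 hC'
    have hw2 := eq_sup_span hf hu huw
    refine ⟨H ⊓ w, Finset.mem_univ _, ?_, hw2⟩
    have hT' := hT (H ⊓ w) inf_le_left hC'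
    have hAB' := hAB y _ hyW hwW
    rw [hw2] at hT' hAB'
    rw [hT'] at ht0
    rw [hAB'] at hA0
    have hq : (Fintype.card F : ℂ) ≠ 0 := by exact_mod_cast Fintype.card_ne_zero
    exact mul_ne_zero hq (mul_ne_zero (const_ne_zero _ _)
      (mul_ne_zero hA0 (right_ne_zero_of_mul ht0)))
  · intro z _ hz
    have k1 : z ≤ W := by
      by_contra h'; apply hz; rw [hv _ h']; simp
    have kB : B y z ≠ 0 := by
      intro h'; apply hz; rw [h']; simp
    rw [hT z (k1.trans hWH) ((hW z (k1.trans hWH)).2 k1), hAB y z hyW k1, ← hB y z kB, pow_succ]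
    ring

theorem R_comm (hf : ∀ v, f v = 0 ↔ v ∈ H) (hu : f u0 = 1)
    {A B : Matrix (Submodule F (Fin n → F)) (Submodule F (Fin n → F)) ℂ}
    {W : Submodule F (Fin n → F)} (hWH : W ≤ H)
    (hW : ∀ y ≤ H, Ctriv u0 χ y ↔ y ≤ W)
    (hA : Ginv H A) (hA2 : ∀ y z, y ≤ H → A y z ≠ 0 → z ≤ H)
    (hA3 : ∀ y z, A y z ≠ 0 → z ≤ y)
    (hAB : ∀ y z, y ≤ W → z ≤ W →
      A (y ⊔ Submodule.span F {u0}) (z ⊔ Submodule.span F {u0}) = B y z)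
    (v : Submodule F (Fin n → F) → ℂ) (hv : ∀ y, ¬ y ≤ W → v y = 0) :
    A.mulVec ((Theta F n H χ (Submodule.span F {u0})).mulVec v)
      = (Theta F n H χ (Submodule.span F {u0})).mulVec (B.mulVec v) := by
  classical
  refine M_ext hf hu (Ginv_mem hA hA2 (Theta_mulVec_mem hf hu v))
    (Theta_mulVec_mem hf hu _) ?_
  intro y hy hC
  have hyW := (hW y hy).1 hC
  rw [Theta_mulVec_apply hf hu (B.mulVec v), inf_sup_span hf hu hy, Matrix.mulVec_mulVec]
  simp only [Matrix.mulVec, dotProduct, Finset.mul_sum, Matrix.mul_apply]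
  refine Finset.sum_congr rfl fun z _ => ?_
  by_cases hz : z ≤ W
  swap
  · rw [hv z hz]; simp
  rw [← mul_assoc]
  congr 1
  have hzH := hz.trans hWH
  simp only [Theta, if_pos hy, if_pos hzH, echi, Finset.mul_sum, Finset.sum_mul]
  rw [Finset.sum_comm]
  refine Finset.sum_congr rfl fun g _ => ?_
  rw [Finset.sum_eq_single (smap F n g (z ⊔ Submodule.span F {u0}))]
  · have e1 := hA g⁻¹ (y ⊔ Submodule.span F {u0}) (smap F n g (z ⊔ Submodule.span F {u0}))
    rw [smap_inv_smap] at e1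
    rw [smap_inv_smap, ← e1]
    unfold delta
    rw [if_pos rfl]
    split_ifs with h
    · rw [h, hAB y z hyW hz]; ring
    · have : A (smap F n ((g⁻¹ : Gsub F n H) : (Fin n → F) ≃ₗ[F] (Fin n → F))
          (y ⊔ Submodule.span F {u0})) (z ⊔ Submodule.span F {u0}) = 0 := by
        by_contra h0
        apply h
        have h1 := eq_sup_span hf hu (le_sup_right.trans (hA3 _ _ h0))
        rw [inf_smap _ le_rfl, inf_sup_span hf hu hy] at h1
        exact h1.symm
      rw [this]; ring
  · intro w _ hw
    unfold delta
    rw [if_neg]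
    · ring
    · intro h
      apply hw
      rw [← h, smap_smap_inv]
  · simp

section char

variable (hf : ∀ v, f v = 0 ↔ v ∈ H) (hu : f u0 = 1) (χ)

/-- The largest subspace on which the character is trivial. -/
noncomputable def WH : Submodule F H where
  carrier := {h | ∀ c : F, psiH hf hu χ (c • h) = 1}
  zero_mem' := fun c => by rw [smul_zero, AddChar.map_zero_eq_one]
  add_mem' := by
    intro h k hh hk c
    rw [smul_add, AddChar.map_add_eq_mul, hh c, hk c, one_mul]
  smul_mem' := by
    intro d h hh c
    rw [smul_smul]
    exact hh _

theorem psiH_GequivH (g : Gsub F n H) : psiH hf hu χ (GequivH hf hu g) = χ g := by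
  rw [psiH_apply]
  congr 1
  exact (GequivH hf hu).symm_apply_apply g

theorem Ctriv_iff {y : Submodule F (Fin n → F)} (hy : y ≤ H) :
    Ctriv u0 χ y ↔ y ≤ (WH χ hf hu).map H.subtype := by
  constructor
  · intro hC v hv
    refine ⟨⟨v, hy hv⟩, ?_, rfl⟩
    intro c
    rw [psiH_apply]
    apply hC
    rw [tauG_apply, hu]
    simpa using y.smul_mem c hv
  · intro h g hg
    obtain ⟨k, hk, hk2⟩ := h hg
    have : k = GequivH hf hu g := Subtype.ext hk2
    have h1 := hk 1
    rwa [one_smul, this, psiH_GequivH] at h1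

theorem WH_sup {h1 : H} (hh : h1 ∉ WH χ hf hu) (k : H) :
    ∃ d : F, k - d • h1 ∈ WH χ hf hu := by
  classical
  let ch : H → AddChar F ℂ := fun h =>
    (psiH hf hu χ).compAddMonoidHom (LinearMap.toSpanSingleton F H h).toAddMonoidHom
  have hch : ∀ h c, ch h c = psiH hf hu χ (c • h) := fun h c => rfl
  have hne : ch h1 ≠ 1 := by
    intro h
    apply hh
    intro c
    rw [← hch, h, AddChar.one_apply]
  have hinj := AddChar.to_mulShift_inj_of_isPrimitive (AddChar.IsPrimitive.of_ne_one hne)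
  have hbij : Function.Bijective (ch h1).mulShift := by
    rw [Fintype.bijective_iff_injective_and_card]
    exact ⟨hinj, AddChar.card_eq.symm⟩
  obtain ⟨d, hd⟩ := hbij.2 (ch k)
  refine ⟨d, fun c => ?_⟩
  have h2 := DFunLike.congr_fun hd c
  rw [AddChar.mulShift_apply, hch, hch] at h2
  rw [smul_sub, AddChar.map_sub_eq_div, ← h2, smul_smul, mul_comm c d, div_self]
  exact (AddChar.val_isUnit _ _).ne_zero

end char

end Aux

section Final

variable {F : Type} [Field F] [Fintype F] {n : ℕ}
variable {H x : Submodule F (Fin n → F)} {f : Dual F (Fin n → F)} {u0 : Fin n → F}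

theorem ite_iff_eq {p q : Prop} {dp : Decidable p} {dq : Decidable q} (h : p ↔ q) :
    (@ite ℂ p dp 1 0) = @ite ℂ q dq 1 0 := by
  by_cases hp : p
  · rw [if_pos hp, if_pos (h.1 hp)]
  · rw [if_neg hp, if_neg (fun hq => hp (h.2 hq))]

theorem of_ite_ne_zero {p : Prop} {dp : Decidable p} (h : (@ite ℂ p dp 1 0) ≠ 0) : p := by
  by_contra hp
  exact h (if_neg hp)

theorem Ginv_LoneT (hx : x ≤ H) : Ginv H (LoneT F n x H) := by
  intro g y z
  unfold LoneT
  refine ite_iff_eq ?_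
  rw [smap_mono_iff, finrank_smap, finrank_smap, inf_smap g hx, inf_smap g hx,
    inf_smap g le_rfl, inf_smap g le_rfl]

theorem Ginv_LtwoT (hx : x ≤ H) : Ginv H (LtwoT F n x H) := by
  intro g y z
  unfold LtwoT
  refine ite_iff_eq ?_
  rw [smap_mono_iff, finrank_smap, finrank_smap, inf_smap g hx, inf_smap g hx,
    inf_smap g le_rfl, inf_smap g le_rfl]

theorem Ginv_LthreeT (hx : x ≤ H) : Ginv H (LthreeT F n x H) := by
  intro g y z
  unfold LthreeT
  refine ite_iff_eq ?_
  rw [smap_mono_iff, finrank_smap, finrank_smap, inf_smap g hx, inf_smap g hx,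
    inf_smap g le_rfl, inf_smap g le_rfl]

theorem Ginv_RoneT (hx : x ≤ H) : Ginv H (RoneT F n x H) := by
  intro g y z
  unfold RoneT
  refine ite_iff_eq ?_
  rw [smap_mono_iff, finrank_smap, finrank_smap, inf_smap g hx, inf_smap g hx,
    inf_smap g le_rfl, inf_smap g le_rfl]

theorem Ginv_RtwoT (hx : x ≤ H) : Ginv H (RtwoT F n x H) := by
  intro g y z
  unfold RtwoT
  refine ite_iff_eq ?_
  rw [smap_mono_iff, finrank_smap, finrank_smap, inf_smap g hx, inf_smap g hx,
    inf_smap g le_rfl, inf_smap g le_rfl]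

theorem finrank_le_inf (hf : ∀ v, f v = 0 ↔ v ∈ H) (hu : f u0 = 1)
    (z : Submodule F (Fin n → F)) : finrank F z ≤ finrank F ↥(H ⊓ z) + 1 := by
  by_cases hz : z ≤ H
  · rw [finrank_inf_of_le hz]; omega
  · rw [finrank_inf_of_not_le hf hu hz]

theorem inf_inf_of_le {W y : Submodule F (Fin n → F)} (hy : y ≤ W) : x ⊓ W ⊓ y = x ⊓ y := by
  rw [inf_assoc, inf_eq_right.2 hy]

theorem exists_functional (hH : finrank F H + 1 = n) {u : Submodule F (Fin n → F)}
    (hu1 : finrank F ↥(H ⊓ u) = 0) (hu2 : finrank F u = 1) :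
    ∃ (f : Dual F (Fin n → F)) (u0 : Fin n → F),
      u = Submodule.span F {u0} ∧ (∀ v, f v = 0 ↔ v ∈ H) ∧ f u0 = 1 := by
  obtain ⟨⟨w, hw⟩, hw0, hspan⟩ := finrank_eq_one_iff'.1 hu2
  have hw0' : w ≠ 0 := fun h => hw0 (Subtype.ext h)
  have hwH : w ∉ H := by
    intro h
    have h1 : H ⊓ u = ⊥ := Submodule.finrank_eq_zero.1 hu1
    have h2 : w ∈ H ⊓ u := ⟨h, hw⟩
    rw [h1] at h2
    exact hw0' (by simpa using h2)
  obtain ⟨f, hfw, hle⟩ := Submodule.exists_le_ker_of_notMem hwH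
  have hker : H = LinearMap.ker f := by
    apply Submodule.eq_of_le_of_finrank_le hle
    have : LinearMap.ker f < ⊤ := by
      rw [lt_top_iff_ne_top]
      intro h
      apply hfw
      have : w ∈ LinearMap.ker f := h ▸ Submodule.mem_top
      simpa using this
    have h2 := Submodule.finrank_lt_finrank_of_lt this
    rw [finrank_top, Module.finrank_fin_fun] at h2
    omega
  refine ⟨(f w)⁻¹ • f, w, ?_, ?_, ?_⟩
  · apply le_antisymm
    · intro v hv
      obtain ⟨c, hc⟩ := hspan ⟨v, hv⟩
      rw [Submodule.mem_span_singleton]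
      exact ⟨c, congrArg Subtype.val hc⟩
    · rw [Submodule.span_singleton_le_iff_mem]; exact hw
  · intro v
    rw [hker, LinearMap.mem_ker]
    simp [hfw]
  · simp [hfw]

end Final

open Classical in
/-- for a character `χ` with `χ|_K ≠ 1_K` there is a unique
`H_χ ∈ P̃_{a-1,b,0}` supporting `Θ_χ`; moreover `Θ_χ` maps
`ℂP(x ∩ H_χ, H_χ)` bijectively onto `M(χ)` and the stated commutation
identities hold on `ℂP(x ∩ H_χ, H_χ)`. -/
theorem Theta_iso_K_nontrivial (F : Type) [Field F] [Fintype F] (a b : ℕ)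
    (x H : Submodule F (Fin (a + b + 1) → F))
    (hx : finrank F x = a) (hH : finrank F H = a + b) (hxH : x ≤ H)
    [Fintype (Gsub F (a + b + 1) H)]
    (u : Submodule F (Fin (a + b + 1) → F))
    (hu : finrank F ↥(x ⊓ u) = 0 ∧ finrank F ↥(H ⊓ u) = 0 ∧ finrank F u = 1)
    (χ : Gsub F (a + b + 1) H →* ℂ)
    (hχK : ¬ ∀ g : Gsub F (a + b + 1) H, memK F (a + b + 1) x g → χ g = 1) :
    (∃! Hχ : Submodule F (Fin (a + b + 1) → F),
      PtMem F (a + b + 1) x H ((a : ℤ) - 1) (b : ℤ) 0 Hχ ∧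
      ∀ y : Submodule F (Fin (a + b + 1) → F), y ≤ H →
        (echi F (a + b + 1) H χ (delta F (a + b + 1) (y ⊔ u)) ≠ 0 ↔ y ≤ Hχ))
    ∧ ∀ Hχ : Submodule F (Fin (a + b + 1) → F),
        PtMem F (a + b + 1) x H ((a : ℤ) - 1) (b : ℤ) 0 Hχ →
        (∀ y : Submodule F (Fin (a + b + 1) → F), y ≤ H →
          (echi F (a + b + 1) H χ (delta F (a + b + 1) (y ⊔ u)) ≠ 0 ↔ y ≤ Hχ)) →
        ((∀ v w : Submodule F (Fin (a + b + 1) → F) → ℂ,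
            (∀ y, ¬y ≤ Hχ → v y = 0) → (∀ y, ¬y ≤ Hχ → w y = 0) →
            (Theta F (a + b + 1) H χ u).mulVec v = (Theta F (a + b + 1) H χ u).mulVec w →
            v = w)
        ∧ (∀ v : Submodule F (Fin (a + b + 1) → F) → ℂ, (∀ y, ¬y ≤ Hχ → v y = 0) →
            (Theta F (a + b + 1) H χ u).mulVec v ∈ Mcomp F (a + b + 1) H χ {y | ¬y ≤ H})
        ∧ (∀ m ∈ Mcomp F (a + b + 1) H χ {y | ¬y ≤ H},
            ∃ v : Submodule F (Fin (a + b + 1) → F) → ℂ,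
              (∀ y, ¬y ≤ Hχ → v y = 0) ∧ (Theta F (a + b + 1) H χ u).mulVec v = m)
        ∧ ∀ v : Submodule F (Fin (a + b + 1) → F) → ℂ, (∀ y, ¬y ≤ Hχ → v y = 0) →
            ((LoneT F (a + b + 1) x H).mulVec ((Theta F (a + b + 1) H χ u).mulVec v)
                = (Fintype.card F : ℂ) •
                    (Theta F (a + b + 1) H χ u).mulVec
                      ((LoneRel F (a + b + 1) (x ⊓ Hχ) Hχ).mulVec v))
            ∧ ((LtwoT F (a + b + 1) x H).mulVec ((Theta F (a + b + 1) H χ u).mulVec v)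
                = (Fintype.card F : ℂ) •
                    (Theta F (a + b + 1) H χ u).mulVec
                      ((LtwoRel F (a + b + 1) (x ⊓ Hχ) Hχ).mulVec v))
            ∧ ((LthreeT F (a + b + 1) x H).mulVec ((Theta F (a + b + 1) H χ u).mulVec v) = 0)
            ∧ ((RoneT F (a + b + 1) x H).mulVec ((Theta F (a + b + 1) H χ u).mulVec v)
                = (Theta F (a + b + 1) H χ u).mulVec
                    ((RoneRel F (a + b + 1) (x ⊓ Hχ) Hχ).mulVec v))
            ∧ ((RtwoT F (a + b + 1) x H).mulVec ((Theta F (a + b + 1) H χ u).mulVec v)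
                = (Theta F (a + b + 1) H χ u).mulVec
                    ((RtwoRel F (a + b + 1) (x ⊓ Hχ) Hχ).mulVec v))
            ∧ ((RthreeT F (a + b + 1) x H).mulVec ((Theta F (a + b + 1) H χ u).mulVec v) = 0)
            ∧ (∀ i j : ℕ, i < a → j ≤ b →
                (EstarT F (a + b + 1) x H i j 0).mulVec
                    ((Theta F (a + b + 1) H χ u).mulVec v) = 0)
            ∧ (∀ j : ℕ, j ≤ b →
                (EstarT F (a + b + 1) x H a j 0).mulVec
                    ((Theta F (a + b + 1) H χ u).mulVec v) = 0)
            ∧ (∀ j : ℕ, j ≤ b →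
                (EstarT F (a + b + 1) x H a j 1).mulVec
                    ((Theta F (a + b + 1) H χ u).mulVec v) = 0)
            ∧ (∀ i j : ℕ, i < a → j ≤ b →
                (EstarT F (a + b + 1) x H i j 1).mulVec
                    ((Theta F (a + b + 1) H χ u).mulVec v)
                  = (Theta F (a + b + 1) H χ u).mulVec
                      ((EstarRel F (a + b + 1) (x ⊓ Hχ) Hχ i j).mulVec v))) := by
  classical
  obtain ⟨hu0, hu1, hu2⟩ := hu
  obtain ⟨f, u0, rfl, hf, hu⟩ := exists_functional (by omega) hu1 hu2
  push Not at hχK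
  obtain ⟨g0, hg0, hg0χ⟩ := hχK
  have hxC : ¬ Ctriv u0 χ x := fun h => hg0χ (h g0 (hg0 u0))
  have hHC : ¬ Ctriv u0 χ H := fun h => hg0χ (h g0 (hxH (hg0 u0)))
  have hle : ∀ {W}, PtMem F (a + b + 1) x H ((a : ℤ) - 1) (b : ℤ) 0 W → W ≤ H := by
    rintro W ⟨-, h2, h3⟩
    apply le_of_finrank_inf
    omega
  constructor
  · refine ⟨(WH χ hf hu).map H.subtype, ⟨?_, ?_⟩, ?_⟩
    · set W := (WH χ hf hu).map H.subtype with hWdef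
      have hWH : W ≤ H := Submodule.map_subtype_le _ _
      have hh1 : GequivH hf hu g0 ∉ WH χ hf hu := by
        intro h
        have := h 1
        rw [one_smul, psiH_GequivH] at this
        exact hg0χ this
      have hne : GequivH hf hu g0 ≠ 0 := by
        intro h
        rw [h] at hh1
        exact hh1 (Submodule.zero_mem _)
      have hcompl : IsCompl (WH χ hf hu) (Submodule.span F {GequivH hf hu g0}) := by
        refine ⟨Submodule.disjoint_span_singleton_of_notMem hh1, ?_⟩
        rw [codisjoint_iff, eq_top_iff]
        intro k _
        obtain ⟨d, hd⟩ := WH_sup χ hf hu hh1 k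
        have h2 : k = (k - d • GequivH hf hu g0) + d • GequivH hf hu g0 := by abel
        rw [h2]
        exact Submodule.add_mem_sup hd
          (Submodule.smul_mem _ _ (Submodule.mem_span_singleton_self _))
      have hdim := Submodule.finrank_add_eq_of_isCompl hcompl
      rw [finrank_span_singleton hne] at hdim
      have hWdim : finrank F W = finrank F (WH χ hf hu) := Submodule.finrank_map_subtype_eq _ _
      have hsup : x ⊔ W = H := by
        apply le_antisymm (sup_le hxH hWH)
        intro k hk
        obtain ⟨d, hd⟩ := WH_sup χ hf hu hh1 ⟨k, hk⟩
        have h2 : k = d • (GequivH hf hu g0 : Fin (a + b + 1) → F)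
          + (k - d • (GequivH hf hu g0 : Fin (a + b + 1) → F)) := by abel
        rw [h2]
        exact Submodule.add_mem_sup (Submodule.smul_mem _ _ (hg0 u0)) ⟨_, hd, rfl⟩
      have hs := Submodule.finrank_sup_add_finrank_inf_eq x W
      rw [hsup] at hs
      refine ⟨?_, ?_, ?_⟩
      · omega
      · rw [finrank_inf_of_le hWH]; omega
      · omega
    · intro y hy
      rw [echi_ne_zero_iff hf hu hy, Ctriv_iff χ hf hu hy]
    · rintro W' ⟨hP, hW'⟩
      have key : ∀ y ≤ H, y ≤ W' ↔ y ≤ (WH χ hf hu).map H.subtype := by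
        intro y hy
        rw [← hW' y hy, echi_ne_zero_iff hf hu hy, Ctriv_iff χ hf hu hy]
      exact le_antisymm ((key _ (hle hP)).1 le_rfl)
        ((key _ (Submodule.map_subtype_le _ _)).2 le_rfl)
  · intro W hP hWe
    have hWH : W ≤ H := hle hP
    have hW : ∀ y ≤ H, Ctriv u0 χ y ↔ y ≤ W := fun y hy => by
      rw [← hWe y hy, echi_ne_zero_iff hf hu hy]
    have hq : (Fintype.card F : ℂ) ≠ 0 := by exact_mod_cast Fintype.card_ne_zero
    refine ⟨?_, fun v _ => Theta_mulVec_mem hf hu v, ?_, ?_⟩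
    · intro v w hv hw h
      funext y
      by_cases hy : y ≤ W
      · have hyH := hy.trans hWH
        have hC := (hW y hyH).2 hy
        have h2 := congrFun h (y ⊔ Submodule.span F {u0})
        rw [Theta_mulVec_sup hf hu v hyH hC, Theta_mulVec_sup hf hu w hyH hC] at h2
        exact mul_left_cancel₀ (const_ne_zero _ _) h2
      · rw [hv y hy, hw y hy]
    · intro m hm
      refine ⟨fun y => if y ≤ W then
        (((Fintype.card F : ℂ) ^ (a + b + 1 - 1))⁻¹ * (Fintype.card F : ℂ) ^ (finrank F y))⁻¹
          * m (y ⊔ Submodule.span F {u0}) else 0, fun y hy => if_neg hy, ?_⟩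
      refine M_ext hf hu (Theta_mulVec_mem hf hu _) hm ?_
      intro y hy hC
      rw [Theta_mulVec_sup hf hu _ hy hC, if_pos ((hW y hy).1 hC), ← mul_assoc,
        mul_inv_cancel₀ (const_ne_zero _ _), one_mul]
    · intro v hv
      have hmem := Theta_mulVec_mem (χ := χ) hf hu v
      have hzero : ∀ y, y ≤ H →
          (Theta F (a + b + 1) H χ (Submodule.span F {u0})).mulVec v y = 0 :=
        fun y hy => hmem.1 y (by simpa using hy)
      refine ⟨?_, ?_, ?_, ?_, ?_, ?_, ?_, ?_, ?_, ?_⟩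
      · refine L_comm hf hu hWH hW (Ginv_LoneT hxH) ?_ ?_ ?_ ?_ v hv
        · intro y z hy h
          obtain ⟨h1, h2, h3, h4⟩ := of_ite_ne_zero h
          rw [finrank_inf_of_le hy] at h4
          exact le_of_finrank_inf (by omega)
        · intro y z h
          exact (of_ite_ne_zero h).1
        · intro y z hy hz
          have hy' := hy.trans hWH
          have hz' := hz.trans hWH
          unfold LoneT LoneRel
          refine ite_iff_eq ?_
          rw [sup_span_le_iff hf hu hy' hz', finrank_sup_span hf hu hy',
            finrank_sup_span hf hu hz', inf_sup_span' hf hu hxH hy', inf_sup_span' hf hu hxH hz',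
            inf_sup_span hf hu hy', inf_sup_span hf hu hz', inf_inf_of_le hy, inf_inf_of_le hz]
          constructor
          · rintro ⟨h1, h2, h3, h4⟩; exact ⟨hz, h1, h4, h3⟩
          · rintro ⟨h0, h1, h2, h3⟩; exact ⟨h1, by omega, h3, h2⟩
        · intro y z h
          exact (of_ite_ne_zero h).2.2.1
      · refine L_comm hf hu hWH hW (Ginv_LtwoT hxH) ?_ ?_ ?_ ?_ v hv
        · intro y z hy h
          obtain ⟨h1, h2, h3, h4⟩ := of_ite_ne_zero h
          rw [finrank_inf_of_le hy] at h4
          exact le_of_finrank_inf (by omega)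
        · intro y z h
          exact (of_ite_ne_zero h).1
        · intro y z hy hz
          have hy' := hy.trans hWH
          have hz' := hz.trans hWH
          unfold LtwoT LtwoRel
          refine ite_iff_eq ?_
          rw [sup_span_le_iff hf hu hy' hz', finrank_sup_span hf hu hy',
            finrank_sup_span hf hu hz', inf_sup_span' hf hu hxH hy', inf_sup_span' hf hu hxH hz',
            inf_sup_span hf hu hy', inf_sup_span hf hu hz', inf_inf_of_le hy, inf_inf_of_le hz]
          constructor
          · rintro ⟨h1, h2, h3, h4⟩; exact ⟨hz, h1, h4, h3⟩
          · rintro ⟨h0, h1, h2, h3⟩; exact ⟨h1, by omega, h3, h2⟩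
        · intro y z h
          exact (of_ite_ne_zero h).2.2.1
      · refine L3_zero (Ginv_LthreeT hxH) ?_ hHC hmem
        intro y z h
        obtain ⟨h1, h2, h3, h4⟩ := of_ite_ne_zero h
        by_contra hy
        have k1 := finrank_inf_of_not_le hf hu hy
        have k2 := finrank_le_inf hf hu z
        omega
      · refine R_comm hf hu hWH hW (Ginv_RoneT hxH) ?_ ?_ ?_ v hv
        · intro y z hy h
          exact (of_ite_ne_zero h).1.trans hy
        · intro y z h
          exact (of_ite_ne_zero h).1
        · intro y z hy hz
          have hy' := hy.trans hWH
          have hz' := hz.trans hWH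
          unfold RoneT RoneRel
          refine ite_iff_eq ?_
          rw [sup_span_le_iff hf hu hz' hy', finrank_sup_span hf hu hy',
            finrank_sup_span hf hu hz', inf_sup_span' hf hu hxH hy', inf_sup_span' hf hu hxH hz',
            inf_sup_span hf hu hy', inf_sup_span hf hu hz', inf_inf_of_le hy, inf_inf_of_le hz]
          constructor
          · rintro ⟨h1, h2, h3, h4⟩; exact ⟨hy, h1, h4, h3⟩
          · rintro ⟨h0, h1, h2, h3⟩; exact ⟨h1, by omega, h3, h2⟩
      · refine R_comm hf hu hWH hW (Ginv_RtwoT hxH) ?_ ?_ ?_ v hv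
        · intro y z hy h
          exact (of_ite_ne_zero h).1.trans hy
        · intro y z h
          exact (of_ite_ne_zero h).1
        · intro y z hy hz
          have hy' := hy.trans hWH
          have hz' := hz.trans hWH
          unfold RtwoT RtwoRel
          refine ite_iff_eq ?_
          rw [sup_span_le_iff hf hu hz' hy', finrank_sup_span hf hu hy',
            finrank_sup_span hf hu hz', inf_sup_span' hf hu hxH hy', inf_sup_span' hf hu hxH hz',
            inf_sup_span hf hu hy', inf_sup_span hf hu hz', inf_inf_of_le hy, inf_inf_of_le hz]
          constructor
          · rintro ⟨h1, h2, h3, h4⟩; exact ⟨hy, h1, h4, h3⟩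
          · rintro ⟨h0, h1, h2, h3⟩; exact ⟨h1, by omega, h3, h2⟩
      · funext y
        rw [Pi.zero_apply]
        apply Finset.sum_eq_zero
        intro z _
        by_cases hz : z ≤ H
        · rw [hzero z hz, mul_zero]
        · have : RthreeT F (a + b + 1) x H y z = 0 := by
            by_contra h
            obtain ⟨h1, h2, h3, h4⟩ := of_ite_ne_zero h
            have k1 := finrank_inf_of_not_le hf hu hz
            have k2 := finrank_le_inf hf hu y
            omega
          show RthreeT F (a + b + 1) x H y z * _ = 0
          rw [this, zero_mul]
      · intro i j _ _
        funext y
        rw [EstarT, Matrix.mulVec_diagonal, Pi.zero_apply]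
        split_ifs with h
        · rw [hzero y (le_of_finrank_inf (by have := h.2; omega)), mul_zero]
        · rw [zero_mul]
      · intro j _
        funext y
        rw [EstarT, Matrix.mulVec_diagonal, Pi.zero_apply]
        split_ifs with h
        · rw [hzero y (le_of_finrank_inf (by have := h.2; omega)), mul_zero]
        · rw [zero_mul]
      · intro j _
        funext y
        rw [EstarT, Matrix.mulVec_diagonal, Pi.zero_apply]
        split_ifs with h
        · rw [M_vanish hf hu hmem, mul_zero]
          intro hC
          have hxy : x ⊓ y = x :=
            Submodule.eq_of_le_of_finrank_eq inf_le_left (by have := h.1; omega)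
          apply hxC
          intro g hg
          exact hC g (le_inf hxH (inf_eq_left.1 hxy) hg)
        · rw [zero_mul]
      · intro i j _ _
        funext z
        rw [EstarT, Matrix.mulVec_diagonal, Theta_mulVec_apply hf hu, Theta_mulVec_apply hf hu,
          EstarRel, Matrix.mulVec_diagonal]
        by_cases hz : z ≤ H
        · have h0 := (Theta_col_mem (χ := χ) hf hu (H ⊓ z)).1 z (by simpa using hz)
          simp only at h0
          rw [h0]; ring
        by_cases hzW : H ⊓ z ≤ W
        · have hiff : PtMem F (a + b + 1) x H i j 1 z ↔
              (H ⊓ z ≤ W ∧ (finrank F ↥(x ⊓ W ⊓ (H ⊓ z)) : ℤ) = i ∧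
                (finrank F ↥(H ⊓ z) : ℤ) = i + j) := by
            have k1 := finrank_inf_of_not_le hf hu hz
            rw [inf_inf_of_le hzW, ← inf_assoc, inf_eq_left.2 hxH]
            unfold PtMem
            constructor
            · rintro ⟨h1, h2, h3⟩; exact ⟨hzW, h1, h2⟩
            · rintro ⟨_, h1, h2⟩; exact ⟨h1, h2, by omega⟩
          by_cases hp : PtMem F (a + b + 1) x H i j 1 z
          · rw [if_pos hp, if_pos (hiff.1 hp)]; ring
          · rw [if_neg hp, if_neg (fun h => hp (hiff.2 h))]; ring
        · rw [hv _ hzW]; ring
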